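/- Let g ∈ C^∞(ℝ) be strictly increasing with g(0)=0 and g'(0)=0. Let φ_{N₁}, φ_{N₂} ∈ L²(𝕋²) with N₁ ≥ N₂, whose Fourier coefficients are supported in B(0,N₁) and B(0,N₂) respectively, and let I ⊂ ℝ be a finite interval centered at zero. Then for every ε>0 there is a constant C = C(ε,I), independent of N₁, N₂, φ_{N₁}, φ_{N₂}, such that ‖ g'(t)^{1/2} (S(t)φ_{N₁})(S(t)φ_{N₂}) ‖_{L²(I×𝕋²)} ≤ C min(N₁,N₂)^ε ‖φ_{N₁}‖_{L²(𝕋²)} ‖φ_{N₂}‖_{L²(𝕋²)}. -/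

import Mathlib

/-!
Since `g'(t) ≥ 0`, the substitution `s = g(t)` absorbs the weight and turns both solutions into
exponential sums in `(s, x)` with frequencies `(-|k|², k)`, which are `2π`-periodic in `s`; the
interval `I` is mapped into finitely many periods. The product of the solutions has frequencies
`(-|k|² - |l|², k + l)`, so by orthogonality and by Cauchy–Schwarz on each fibre its squared norm
is at most the largest number of pairs `(k, l) ∈ B(0,N₁) × B(0,N₂)` with the same frequency, times
`∑ |φ̂₁(k)|² |φ̂₂(l)|²`, and Bessel's inequality bounds the latter.

Fixing the frequency `(τ, m)` puts `2l - m` on a circle `|2l - m|² = D` with `|l| ≤ N₂`. If this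
circle contains three such points, then `D ≤ 64 N₂⁶`: a lattice triangle with sides at most `2N₂`
has area at least `1/2`, so its circumradius is at most `4N₂³`. Since a circle of squared radius
`D` about the origin contains at most `C_δ D^δ` lattice points by the divisor bound in the
Gaussian integers, there are at most `C_ε N₂^ε` pairs, whatever `N₁` is.
-/

open MeasureTheory Real Set Filter
open scoped ENNReal NNReal

noncomputable section

/-- The Euclidean length `|k|` of a frequency `k ∈ ℤ²`. -/
def zAbs2 (k : ℤ × ℤ) : ℝ := Real.sqrt ((k.1 : ℝ) ^ 2 + (k.2 : ℝ) ^ 2)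

/-- A function on `𝕋²`, modelled as a `2π`-periodic function on `ℝ²`. -/
def Periodic2 (φ : ℝ → ℝ → ℂ) : Prop :=
  ∀ x1 x2 : ℝ, φ (x1 + 2 * π) x2 = φ x1 x2 ∧ φ x1 (x2 + 2 * π) = φ x1 x2

/-- Fourier coefficient `φ̂(k) = ∫_{𝕋²} e^{-ik·x} φ(x) dx`. -/
def fCoeff2 (φ : ℝ → ℝ → ℂ) (k : ℤ × ℤ) : ℂ :=
  ∫ x1 in (0:ℝ)..(2 * π), ∫ x2 in (0:ℝ)..(2 * π),
    Complex.exp (-Complex.I * (((k.1 : ℝ) * x1 + (k.2 : ℝ) * x2 : ℝ) : ℂ)) * φ x1 x2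

/-- The Sobolev `H^s(𝕋²)` norm. -/
def HsNorm2 (s : ℝ) (φ : ℝ → ℝ → ℂ) : ℝ≥0∞ :=
  (∑' k : ℤ × ℤ, ENNReal.ofReal ((1 + zAbs2 k) ^ (2 * s) * ‖fCoeff2 φ k‖ ^ 2)) ^ ((1:ℝ)/2)

/-- Space-time Fourier transform with time transform subordinate to `g`:
`ũ(τ,k) = ∫ e^{-i g(t) τ} (u(t,·))^(k) dt`.  For `g = id` this is the standard transform. -/
def tFT2 (g : ℝ → ℝ) (u : ℝ → ℝ → ℝ → ℂ) (τ : ℝ) (k : ℤ × ℤ) : ℂ :=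
  ∫ t : ℝ, Complex.exp (-Complex.I * ((g t * τ : ℝ) : ℂ)) * fCoeff2 (u t) k

/-- The `X^{s,b}_g(ℝ×𝕋²)` norm. -/
def XsbgNorm2 (g : ℝ → ℝ) (s b : ℝ) (u : ℝ → ℝ → ℝ → ℂ) : ℝ≥0∞ :=
  (∑' k : ℤ × ℤ,
      ENNReal.ofReal ((1 + zAbs2 k) ^ (2 * s)) *
        ∫⁻ τ : ℝ,
          ENNReal.ofReal ((1 + |τ - zAbs2 k ^ 2|) ^ (2 * b) * ‖tFT2 g u τ k‖ ^ 2)) ^ ((1:ℝ)/2)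

/-- The standard `X^{s,b}(ℝ×𝕋²)` norm. -/
def XsbNorm2 (s b : ℝ) (u : ℝ → ℝ → ℝ → ℂ) : ℝ≥0∞ := XsbgNorm2 id s b u

/-- Time derivative `∂_t u`. -/
def tderiv2 (u : ℝ → ℝ → ℝ → ℂ) (t x1 x2 : ℝ) : ℂ := deriv (fun r => u r x1 x2) t

/-- Second derivative in the first space variable, `∂²_{x₁}`. -/
def dX1 (φ : ℝ → ℝ → ℂ) (x1 x2 : ℝ) : ℂ := iteratedDeriv 2 (fun y => φ y x2) x1

/-- Second derivative in the second space variable, `∂²_{x₂}`. -/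
def dX2 (φ : ℝ → ℝ → ℂ) (x1 x2 : ℝ) : ℂ := iteratedDeriv 2 (fun y => φ x1 y) x2

/-- `u ∈ C([-T,T]; H^s(𝕋²))`: finite `H^s` norms and continuity in time for the `H^s` metric. -/
def ContHs2 (s T : ℝ) (u : ℝ → ℝ → ℝ → ℂ) : Prop :=
  (∀ t ∈ Icc (-T) T, HsNorm2 s (u t) < ⊤) ∧
    ∀ t₀ ∈ Icc (-T) T,
      Tendsto (fun t => HsNorm2 s (fun x1 x2 => u t x1 x2 - u t₀ x1 x2))
        (nhdsWithin t₀ (Icc (-T) T)) (nhds 0)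

/-- The solution operator `S(t)φ = Σ_k e^{ik·x} e^{-i g(t)|k|²} φ̂(k)`. -/
def Sop2 (g : ℝ → ℝ) (φ : ℝ → ℝ → ℂ) (t x1 x2 : ℝ) : ℂ :=
  ∑' k : ℤ × ℤ,
    Complex.exp (Complex.I * (((k.1 : ℝ) * x1 + (k.2 : ℝ) * x2 : ℝ) : ℂ)) *
      Complex.exp (-Complex.I * ((g t * ((k.1 : ℝ) ^ 2 + (k.2 : ℝ) ^ 2) : ℝ) : ℂ)) *
        fCoeff2 φ k

/-- The two-parameter solution operator `S(t,s)φ = Σ_k e^{ik·x} e^{-i(g(t)-g(s))|k|²} φ̂(k)`. -/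
def Sop2' (g : ℝ → ℝ) (φ : ℝ → ℝ → ℂ) (t s' x1 x2 : ℝ) : ℂ :=
  ∑' k : ℤ × ℤ,
    Complex.exp (Complex.I * (((k.1 : ℝ) * x1 + (k.2 : ℝ) * x2 : ℝ) : ℂ)) *
      Complex.exp (-Complex.I * (((g t - g s') * ((k.1 : ℝ) ^ 2 + (k.2 : ℝ) ^ 2) : ℝ) : ℂ)) *
        fCoeff2 φ k

/-- The `L^p(𝕋²)` norm. -/
def LpT2 (p : ℝ) (φ : ℝ → ℝ → ℂ) : ℝ≥0∞ :=
  (∫⁻ x1 in Ioc (0:ℝ) (2 * π), ∫⁻ x2 in Ioc (0:ℝ) (2 * π),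
      ENNReal.ofReal (‖φ x1 x2‖ ^ p)) ^ ((1:ℝ)/p)

/-- The `L^p(I×𝕋²)` norm. -/
def LpIT2 (p : ℝ) (I : Set ℝ) (u : ℝ → ℝ → ℝ → ℂ) : ℝ≥0∞ :=
  (∫⁻ t in I, ∫⁻ x1 in Ioc (0:ℝ) (2 * π), ∫⁻ x2 in Ioc (0:ℝ) (2 * π),
      ENNReal.ofReal (‖u t x1 x2‖ ^ p)) ^ ((1:ℝ)/p)

/-- A smooth cutoff function adapted to the interval `[r₁,r₂]`:
it is `1` on `[r₁,r₂]`, takes values in `[0,1]` and is supported in `[2r₁,2r₂]`. -/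
def AdaptedCutoff (χ : ℝ → ℝ) (r₁ r₂ : ℝ) : Prop :=
  ContDiff ℝ (⊤ : ℕ∞) χ ∧ (∀ t ∈ Icc r₁ r₂, χ t = 1) ∧ (∀ t, χ t ∈ Icc (0:ℝ) 1) ∧
    tsupport χ ⊆ Icc (2 * r₁) (2 * r₂)

/-- Time Fourier transform subordinate to `g`: `f̃(τ) = ∫ e^{-i g(t) τ} f(t) dt`. -/
def tFTt (g : ℝ → ℝ) (f : ℝ → ℂ) (τ : ℝ) : ℂ :=
  ∫ t : ℝ, Complex.exp (-Complex.I * ((g t * τ : ℝ) : ℂ)) * f t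

/-- The `H^{1,b}_g(ℝ)` norm `∫ ⟨τ⟩^b |f̃(τ)| dτ`; for `g = id` it is the `H^{1,b}` norm. -/
def H1bgNorm (g : ℝ → ℝ) (b : ℝ) (f : ℝ → ℂ) : ℝ≥0∞ :=
  ∫⁻ τ : ℝ, ENNReal.ofReal ((1 + τ ^ 2) ^ (b / 2) * ‖tFTt g f τ‖)

/-- The `H^b(ℝ)` norm in time, `(∫ ⟨τ⟩^{2b}|f̂(τ)|² dτ)^{1/2}`. -/
def HbtNorm (b : ℝ) (f : ℝ → ℂ) : ℝ≥0∞ :=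
  (∫⁻ τ : ℝ, ENNReal.ofReal ((1 + τ ^ 2) ^ b * ‖tFTt id f τ‖ ^ 2)) ^ ((1:ℝ)/2)

/-- The mixed norm `H^{p₁}_t H^{s₁}_x` on `ℝ × 𝕋²`. -/
def HptHsxNorm (p₁ s₁ : ℝ) (v : ℝ → ℝ → ℝ → ℂ) : ℝ≥0∞ :=
  (∑' k : ℤ × ℤ,
      ENNReal.ofReal ((1 + zAbs2 k) ^ (2 * s₁)) *
        ∫⁻ τ : ℝ, ENNReal.ofReal ((1 + τ ^ 2) ^ p₁ * ‖tFT2 id v τ k‖ ^ 2)) ^ ((1:ℝ)/2)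

/-! ### Lattice points on circles -/

/-- The squared Euclidean length `|k|²` of a lattice point, as an integer. -/
def sqNorm (k : ℤ × ℤ) : ℤ := k.1 ^ 2 + k.2 ^ 2

lemma sqNorm_nonneg (k : ℤ × ℤ) : 0 ≤ sqNorm k := by unfold sqNorm; positivity

lemma sqNorm_eq_zero {k : ℤ × ℤ} : sqNorm k = 0 ↔ k = 0 := by
  unfold sqNorm
  rw [add_eq_zero_iff_of_nonneg (sq_nonneg _) (sq_nonneg _), sq_eq_zero_iff, sq_eq_zero_iff,
    Prod.ext_iff, Prod.fst_zero, Prod.snd_zero]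

lemma sqNorm_add_add_sqNorm_sub (k l : ℤ × ℤ) :
    sqNorm (k + l) + sqNorm (k - l) = 2 * (sqNorm k + sqNorm l) := by
  simp only [sqNorm, Prod.fst_add, Prod.snd_add, Prod.fst_sub, Prod.snd_sub]
  ring

lemma sqNorm_sub_le {R : ℝ} {k l : ℤ × ℤ} (hk : (sqNorm k : ℝ) ≤ R) (hl : (sqNorm l : ℝ) ≤ R) :
    (sqNorm (k - l) : ℝ) ≤ 4 * R := by
  have hpar : (sqNorm (k + l) : ℝ) + sqNorm (k - l) = 2 * (sqNorm k + sqNorm l) := by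
    exact_mod_cast sqNorm_add_add_sqNorm_sub k l
  have hadd : (0 : ℝ) ≤ sqNorm (k + l) := by exact_mod_cast sqNorm_nonneg _
  linarith

lemma finite_setOf_sqNorm_le (n : ℤ) : {k : ℤ × ℤ | sqNorm k ≤ n}.Finite := by
  refine ((finite_Icc (-n) n).prod (finite_Icc (-n) n)).subset fun k (hk : sqNorm k ≤ n) => ?_
  have hsq : k.1 ^ 2 + k.2 ^ 2 ≤ n := hk
  constructor <;>
    refine abs_le.1 ((Int.abs_eq_natAbs _).trans_le ((Int.natAbs_le_self_sq _).trans ?_))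
  · linarith [sq_nonneg k.2]
  · linarith [sq_nonneg k.1]

/-- The Gaussian integers of norm `n`, i.e. the representations of `n` as an ordered sum of two
squares. -/
def gaussianCircle (n : ℕ) : Finset GaussianInt :=
  ((finite_setOf_sqNorm_le n).preimage (f := fun z : GaussianInt => (z.re, z.im))
    (fun _ _ _ _ h => Zsqrtd.ext (congrArg Prod.fst h) (congrArg Prod.snd h))).toFinset.filter
      fun z => z.norm = n

lemma mem_gaussianCircle {n : ℕ} {z : GaussianInt} : z ∈ gaussianCircle n ↔ z.norm = n := by
  rw [gaussianCircle, Finset.mem_filter, and_iff_right_iff_imp]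
  intro hz
  rw [Finite.mem_toFinset, mem_preimage, Set.mem_ofPred_eq, ← hz, Zsqrtd.norm_def, sqNorm]
  linarith

lemma exists_prime_norm_eq_pow {p : ℕ} (hp : p.Prime) :
    ∃ ϖ : GaussianInt, Prime ϖ ∧ ∃ f ≠ 0, ϖ.norm = (p ^ f : ℕ) := by
  have hp_not_unit : ¬IsUnit (p : GaussianInt) := by
    rw [← Zsqrtd.norm_eq_one_iff, Zsqrtd.norm_natCast, Int.natAbs_mul, Int.natAbs_natCast,
      mul_eq_one, and_self]
    exact hp.ne_one
  have hp_ne_zero : (p : GaussianInt) ≠ 0 := by exact_mod_cast hp.ne_zero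
  obtain ⟨ϖ, hϖ, hϖp⟩ := WfDvdMonoid.exists_irreducible_factor hp_not_unit hp_ne_zero
  have hnorm_dvd : ϖ.norm.natAbs ∣ p ^ 2 := by
    have hdvd : ϖ.norm ∣ (p : GaussianInt).norm := map_dvd Zsqrtd.normMonoidHom hϖp
    simpa [sq, Zsqrtd.norm_natCast, Int.natAbs_mul] using Int.natAbs_dvd_natAbs.2 hdvd
  obtain ⟨f, -, hf⟩ := (Nat.dvd_prime_pow hp).1 hnorm_dvd
  refine ⟨ϖ, hϖ.prime, f, ?_, ?_⟩
  · rintro rfl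
    exact hϖ.not_isUnit (Zsqrtd.norm_eq_one_iff.1 hf)
  · rw [← hf, Int.natAbs_of_nonneg (Zsqrtd.norm_nonneg (by norm_num) _)]

lemma exists_eq_pow_mul_of_pow_mul_eq {p m a f n : ℕ} (hp : p.Prime) (hm : ¬p ∣ m)
    (h : p ^ f * n = p ^ a * m) : ∃ b, a = b + f ∧ n = p ^ b * m := by
  have hdvd : p ^ f ∣ p ^ a :=
    (((hp.coprime_iff_not_dvd).2 hm).pow_left f).dvd_of_dvd_mul_right ⟨n, h.symm⟩
  obtain ⟨b, rfl⟩ := Nat.exists_eq_add_of_le' ((Nat.pow_dvd_pow_iff_le_right hp.one_lt).1 hdvd)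
  refine ⟨b, rfl, Nat.eq_of_mul_eq_mul_left (pow_pos hp.pos f) ?_⟩
  rw [h, pow_add]
  ring

lemma exists_pow_mul_star_pow_mul_eq {p f m : ℕ} (hp : p.Prime) (hm : ¬p ∣ m) {ϖ : GaussianInt}
    (hϖ : Prime ϖ) (hf : f ≠ 0) (hnorm : ϖ.norm = (p ^ f : ℕ)) (a : ℕ) {z : GaussianInt}
    (hz : z.norm = (p ^ a * m : ℕ)) :
    ∃ i j, i + j = a / f ∧ ∃ y ∈ gaussianCircle m, ϖ ^ i * star ϖ ^ j * y = z := by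
  induction a using Nat.strong_induction_on generalizing z with
  | _ a ih =>
  rcases eq_or_ne a 0 with rfl | ha
  · exact ⟨0, 0, by simp, z, mem_gaussianCircle.2 (by simpa using hz), by simp⟩
  have exponent_drop {ϖ' v : GaussianInt} (hϖ' : ϖ'.norm = ϖ.norm) (hv : z = ϖ' * v) :
      ∃ b < a, a / f = b / f + 1 ∧ v.norm = (p ^ b * m : ℕ) := by
    obtain ⟨n, hn⟩ := Int.eq_ofNat_of_zero_le (Zsqrtd.norm_nonneg (by norm_num) v)
    rw [hv, Zsqrtd.norm_mul, hϖ', hnorm, hn] at hz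
    obtain ⟨b, rfl, rfl⟩ := exists_eq_pow_mul_of_pow_mul_eq hp hm (by exact_mod_cast hz)
    exact ⟨b, by omega, Nat.add_div_right _ (Nat.pos_of_ne_zero hf), hn⟩
  have hϖp : ϖ ∣ p := hϖ.dvd_of_dvd_pow (n := f) ⟨star ϖ, by
    rw [← Zsqrtd.norm_eq_mul_conj, hnorm]; push_cast; rfl⟩
  have hpz : (p : GaussianInt) ∣ z * star z := by
    rw [← Zsqrtd.norm_eq_mul_conj, hz]
    exact_mod_cast (dvd_pow_self p ha).mul_right m
  rcases hϖ.dvd_or_dvd (hϖp.trans hpz) with ⟨v, hv⟩ | ⟨v, hv⟩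
  · obtain ⟨b, hba, hdiv, hvnorm⟩ := exponent_drop rfl hv
    obtain ⟨i, j, hij, y, hy, rfl⟩ := ih b hba hvnorm
    exact ⟨i + 1, j, by omega, y, hy, by rw [hv]; ring⟩
  · have hv' : z = star ϖ * star v := by rw [← star_star z, hv, star_mul, mul_comm]
    obtain ⟨b, hba, hdiv, hvnorm⟩ := exponent_drop (Zsqrtd.norm_conj ϖ) hv'
    obtain ⟨i, j, hij, y, hy, hyv⟩ := ih b hba hvnorm
    exact ⟨i, j + 1, by omega, y, hy, by rw [hv', ← hyv]; ring⟩

lemma card_gaussianCircle_prime_pow_mul_le {p m : ℕ} (hp : p.Prime) (hm : ¬p ∣ m) (a : ℕ) :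
    (gaussianCircle (p ^ a * m)).card ≤ (a + 1) * (gaussianCircle m).card := by
  classical
  obtain ⟨ϖ, hϖ, f, hf, hnorm⟩ := exists_prime_norm_eq_pow hp
  let pairs := Finset.HasAntidiagonal.antidiagonal (a / f)
  have hsub : gaussianCircle (p ^ a * m) ⊆ (pairs ×ˢ gaussianCircle m).image
      fun q => ϖ ^ q.1.1 * star ϖ ^ q.1.2 * q.2 := by
    intro z hz
    obtain ⟨i, j, hij, y, hy, rfl⟩ :=
      exists_pow_mul_star_pow_mul_eq hp hm hϖ hf hnorm a (mem_gaussianCircle.1 hz)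
    exact Finset.mem_image.2 ⟨((i, j), y),
      Finset.mem_product.2 ⟨Finset.HasAntidiagonal.mem_antidiagonal.2 hij, hy⟩, rfl⟩
  calc (gaussianCircle (p ^ a * m)).card
      ≤ (pairs ×ˢ gaussianCircle m).card := (Finset.card_le_card hsub).trans Finset.card_image_le
    _ = (a / f + 1) * (gaussianCircle m).card := by
        rw [Finset.card_product, Finset.Nat.card_antidiagonal]
    _ ≤ (a + 1) * (gaussianCircle m).card := by gcongr; exact Nat.div_le_self a f

lemma card_gaussianCircle_le {n : ℕ} (hn : n ≠ 0) :
    (gaussianCircle n).card ≤ n.divisors.card * (gaussianCircle 1).card := by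
  induction n using Nat.recOnPrimePow with
  | zero => exact absurd rfl hn
  | one => simp
  | prime_pow_mul m p a hp hpm _ ih =>
    have hm : m ≠ 0 := right_ne_zero_of_mul hn
    have hcoprime : (p ^ a).Coprime m := ((hp.coprime_iff_not_dvd).2 hpm).pow_left a
    calc (gaussianCircle (p ^ a * m)).card
        ≤ (a + 1) * (gaussianCircle m).card := card_gaussianCircle_prime_pow_mul_le hp hpm a
      _ ≤ (a + 1) * (m.divisors.card * (gaussianCircle 1).card) := by gcongr; exact ih hm
      _ = (p ^ a * m).divisors.card * (gaussianCircle 1).card := by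
          rw [hcoprime.card_divisors_mul, Nat.divisors_prime_pow hp, Finset.card_map,
            Finset.card_range, mul_assoc]

lemma exists_add_one_le_mul_two_rpow {δ : ℝ} (hδ : 0 < δ) :
    ∃ K : ℝ, 1 ≤ K ∧ ∀ a : ℕ, (a : ℝ) + 1 ≤ K * 2 ^ (a * δ) := by
  have hc : 0 < δ * Real.log 2 := mul_pos hδ (Real.log_pos one_lt_two)
  refine ⟨1 + 1 / (δ * Real.log 2), le_add_of_nonneg_right (by positivity), fun a => ?_⟩
  have hexp : (2 : ℝ) ^ (a * δ) = Real.exp (a * (δ * Real.log 2)) := by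
    rw [Real.rpow_def_of_pos two_pos]
    congr 1
    ring
  rw [hexp, add_comm, add_mul, one_mul, div_mul_eq_mul_div, one_mul]
  refine add_le_add (Real.one_le_exp (by positivity)) ((le_div_iff₀ hc).2 ?_)
  linarith [Real.add_one_le_exp ((a : ℝ) * (δ * Real.log 2))]

lemma add_one_le_rpow_of_two_rpow_inv_le {δ x : ℝ} (hδ : 0 < δ) (hx : 2 ^ δ⁻¹ ≤ x) (a : ℕ) :
    (a : ℝ) + 1 ≤ x ^ (a * δ) := by
  have hx0 : 0 ≤ x := le_trans (by positivity) hx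
  calc (a : ℝ) + 1 ≤ 2 ^ a := by exact_mod_cast Nat.succ_le_of_lt Nat.lt_two_pow_self
    _ ≤ (x ^ δ) ^ a := by
        gcongr
        exact (Real.rpow_inv_le_iff_of_pos zero_le_two hx0 hδ).1 hx
    _ = x ^ (a * δ) := by rw [mul_comm, Real.rpow_mul hx0, Real.rpow_natCast]

lemma natCast_rpow_eq_prod_primeFactors {n : ℕ} (hn : n ≠ 0) (δ : ℝ) :
    (n : ℝ) ^ δ = ∏ p ∈ n.primeFactors, (p : ℝ) ^ (n.factorization p * δ) := by
  conv_lhs => rw [← Nat.prod_factorization_pow_eq_self hn,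
    Nat.prod_factorization_eq_prod_primeFactors]
  push_cast
  rw [← Real.finsetProd_rpow _ _ fun p _ => by positivity]
  refine Finset.prod_congr rfl fun p _ => ?_
  rw [Real.rpow_mul (by positivity), Real.rpow_natCast]

/-- The factor `a + 1` of `d(n)` is at most `p ^ (a δ)` unless `p < 2 ^ (1 / δ)`, so the
constant only has to absorb boundedly many primes. -/
lemma exists_card_divisors_le_mul_rpow {δ : ℝ} (hδ : 0 < δ) :
    ∃ C : ℝ, 1 ≤ C ∧ ∀ n : ℕ, n ≠ 0 → (n.divisors.card : ℝ) ≤ C * (n : ℝ) ^ δ := by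
  obtain ⟨K, hK1, hK⟩ := exists_add_one_le_mul_two_rpow hδ
  obtain ⟨P, hP⟩ := exists_nat_ge ((2 : ℝ) ^ δ⁻¹)
  refine ⟨K ^ P, one_le_pow₀ hK1, fun n hn => ?_⟩
  have hfactor : ∀ p ∈ n.primeFactors, (n.factorization p : ℝ) + 1 ≤
      (if p < P then K else 1) * (p : ℝ) ^ (n.factorization p * δ) := by
    intro p hp
    have hp2 : (2 : ℝ) ≤ p := by exact_mod_cast (Nat.prime_of_mem_primeFactors hp).two_le
    split_ifs with hpP
    · refine (hK _).trans ?_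
      gcongr
    · rw [one_mul]
      exact add_one_le_rpow_of_two_rpow_inv_le hδ (hP.trans (by exact_mod_cast not_lt.1 hpP)) _
  have hconst : ∏ p ∈ n.primeFactors, (if p < P then K else 1) ≤ K ^ P := by
    rw [Finset.prod_ite, Finset.prod_const, Finset.prod_const_one, mul_one]
    have hcard : (n.primeFactors.filter (· < P)).card ≤ (Finset.range P).card :=
      Finset.card_le_card fun p hp => Finset.mem_range.2 (Finset.mem_filter.1 hp).2
    exact pow_le_pow_right₀ hK1 (hcard.trans_eq (Finset.card_range P))
  calc (n.divisors.card : ℝ) = ∏ p ∈ n.primeFactors, ((n.factorization p : ℝ) + 1) := by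
        rw [Nat.card_divisors hn]
        push_cast
        rfl
    _ ≤ ∏ p ∈ n.primeFactors, ((if p < P then K else 1) * (p : ℝ) ^ (n.factorization p * δ)) :=
        Finset.prod_le_prod (fun p _ => by positivity) hfactor
    _ = (∏ p ∈ n.primeFactors, if p < P then K else 1) * (n : ℝ) ^ δ := by
        rw [Finset.prod_mul_distrib, natCast_rpow_eq_prod_primeFactors hn]
    _ ≤ K ^ P * (n : ℝ) ^ δ := by gcongr

/-- Cross-multiplied Cramer's rule for the system `u · w = |u|²`, `v · w = |v|²`; it is the
identity `abc = 4RΔ` for the triangle with sides `u`, `v`, `u - v` and circumdiameter `w`. -/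
lemma sq_det_mul_sqNorm_eq {u v w : ℤ × ℤ} (hu : u.1 * w.1 + u.2 * w.2 = sqNorm u)
    (hv : v.1 * w.1 + v.2 * w.2 = sqNorm v) :
    (u.1 * v.2 - u.2 * v.1) ^ 2 * sqNorm w = sqNorm u * sqNorm v * sqNorm (u - v) := by
  have cramer_fst : (u.1 * v.2 - u.2 * v.1) * w.1 = v.2 * sqNorm u - u.2 * sqNorm v := by
    linear_combination v.2 * hu - u.2 * hv
  have cramer_snd : (u.1 * v.2 - u.2 * v.1) * w.2 = u.1 * sqNorm v - v.1 * sqNorm u := by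
    linear_combination u.1 * hv - v.1 * hu
  calc (u.1 * v.2 - u.2 * v.1) ^ 2 * sqNorm w
      = ((u.1 * v.2 - u.2 * v.1) * w.1) ^ 2 + ((u.1 * v.2 - u.2 * v.1) * w.2) ^ 2 := by
        rw [sqNorm]; ring
    _ = sqNorm u * sqNorm v * sqNorm (u - v) := by
        rw [cramer_fst, cramer_snd]
        simp only [sqNorm, Prod.fst_sub, Prod.snd_sub]
        ring

lemma sqNorm_pos {k : ℤ × ℤ} (hk : k ≠ 0) : 0 < sqNorm k :=
  (sqNorm_nonneg k).lt_of_ne' (mt sqNorm_eq_zero.1 hk)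

/-- The determinant in `sq_det_mul_sqNorm_eq` is a nonzero integer, hence at least `1` in absolute
value. -/
lemma sqNorm_le_of_inner_eq {u v w : ℤ × ℤ} (hu : u.1 * w.1 + u.2 * w.2 = sqNorm u)
    (hv : v.1 * w.1 + v.2 * w.2 = sqNorm v) (hu0 : u ≠ 0) (hv0 : v ≠ 0) (huv : u ≠ v) :
    sqNorm w ≤ sqNorm u * sqNorm v * sqNorm (u - v) := by
  have hdet := sq_det_mul_sqNorm_eq hu hv
  have hpos : 0 < sqNorm u * sqNorm v * sqNorm (u - v) :=
    mul_pos (mul_pos (sqNorm_pos hu0) (sqNorm_pos hv0)) (sqNorm_pos (sub_ne_zero.2 huv))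
  have hdet_pos : 0 < (u.1 * v.2 - u.2 * v.1) ^ 2 :=
    pos_of_mul_pos_left (hdet ▸ hpos) (sqNorm_nonneg w)
  rw [← hdet]
  exact le_mul_of_one_le_left (sqNorm_nonneg w) hdet_pos

lemma le_mul_mul_of_three_points_on_circle {a b c m : ℤ × ℤ} {D : ℤ}
    (ha : sqNorm (2 • a - m) = D) (hb : sqNorm (2 • b - m) = D) (hc : sqNorm (2 • c - m) = D)
    (hab : a ≠ b) (hac : a ≠ c) (hbc : b ≠ c) :
    D ≤ sqNorm (b - a) * sqNorm (c - a) * sqNorm (b - c) := by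
  have hneg : sqNorm (m - 2 • a) = D := by
    rw [← ha]
    simp only [sqNorm, Prod.fst_sub, Prod.snd_sub]
    ring
  have chord {x : ℤ × ℤ} (hx : sqNorm (2 • x - m) = D) :
      (x - a).1 * (m - 2 • a).1 + (x - a).2 * (m - 2 • a).2 = sqNorm (x - a) := by
    simp only [sqNorm, two_nsmul, Prod.fst_sub, Prod.snd_sub, Prod.fst_add, Prod.snd_add]
      at ha hx ⊢
    linarith
  have hle := sqNorm_le_of_inner_eq (chord hb) (chord hc) (sub_ne_zero.2 hab.symm)
    (sub_ne_zero.2 hac.symm) (sub_left_injective.ne hbc)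
  rwa [hneg, sub_sub_sub_cancel_right] at hle

lemma card_le_card_gaussianCircle {m : ℤ × ℤ} {n : ℕ} {L : Finset (ℤ × ℤ)}
    (hL : ∀ l ∈ L, sqNorm (2 • l - m) = n) : L.card ≤ (gaussianCircle n).card := by
  refine Finset.card_le_card_of_injOn
    (fun l => (⟨(2 • l - m).1, (2 • l - m).2⟩ : GaussianInt)) (fun l hl => ?_)
    (fun l _ l' _ h => ?_)
  · rw [Finset.mem_coe, mem_gaussianCircle, Zsqrtd.norm_def, ← hL l hl, sqNorm]
    ring
  · rw [Zsqrtd.ext_iff] at h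
    exact smul_right_injective (ℤ × ℤ) (two_ne_zero' ℕ) (sub_left_injective (Prod.ext h.1 h.2))

lemma exists_card_gaussianCircle_le_mul_rpow {δ : ℝ} (hδ : 0 < δ) :
    ∃ C : ℝ, 0 ≤ C ∧ ∀ n : ℕ, n ≠ 0 → ((gaussianCircle n).card : ℝ) ≤ C * (n : ℝ) ^ δ := by
  obtain ⟨C, hC, hdiv⟩ := exists_card_divisors_le_mul_rpow hδ
  refine ⟨C * (gaussianCircle 1).card, by positivity, fun n hn => ?_⟩
  calc ((gaussianCircle n).card : ℝ) ≤ n.divisors.card * (gaussianCircle 1).card := by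
        exact_mod_cast card_gaussianCircle_le hn
    _ ≤ C * (n : ℝ) ^ δ * (gaussianCircle 1).card := by gcongr; exact hdiv n hn
    _ = C * (gaussianCircle 1).card * (n : ℝ) ^ δ := by ring

/-- The centre and the radius of the circle are arbitrary: if they are so large that the divisor
bound is useless, the circle meets the ball in at most two lattice points. -/
lemma exists_card_circle_inter_ball_le_mul_rpow {δ : ℝ} (hδ : 0 < δ) :
    ∃ C : ℝ, 0 < C ∧ ∀ N : ℝ, 1 ≤ N → ∀ (m : ℤ × ℤ) (D : ℤ) (L : Finset (ℤ × ℤ)),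
      (∀ l ∈ L, (sqNorm l : ℝ) ≤ N ^ 2 ∧ sqNorm (2 • l - m) = D) → (L.card : ℝ) ≤ C * N ^ δ := by
  obtain ⟨C, hC, hcircle⟩ := exists_card_gaussianCircle_le_mul_rpow (δ := δ / 6) (by positivity)
  refine ⟨2 + C * 64 ^ (δ / 6), by positivity, fun N hN m D L hL => ?_⟩
  have hNδ : 1 ≤ N ^ δ := Real.one_le_rpow hN hδ.le
  have hC' : 0 ≤ C * 64 ^ (δ / 6) * N ^ δ := by positivity
  rw [add_mul]
  rcases le_or_gt L.card 2 with hcard | hcard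
  · have : (L.card : ℝ) ≤ 2 := by exact_mod_cast hcard
    linarith
  obtain ⟨a, b, c, ha, hb, hc, hab, hac, hbc⟩ := Finset.two_lt_card_iff.1 hcard
  have hD : (D : ℝ) ≤ 64 * N ^ 6 := by
    calc (D : ℝ) ≤ sqNorm (b - a) * sqNorm (c - a) * sqNorm (b - c) := by
          exact_mod_cast le_mul_mul_of_three_points_on_circle (hL a ha).2 (hL b hb).2 (hL c hc).2
            hab hac hbc
      _ ≤ 4 * N ^ 2 * (4 * N ^ 2) * (4 * N ^ 2) := by
          have hnonneg (k : ℤ × ℤ) : (0 : ℝ) ≤ sqNorm k := by exact_mod_cast sqNorm_nonneg k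
          gcongr
          exacts [hnonneg _, hnonneg _, sqNorm_sub_le (hL b hb).1 (hL a ha).1,
            sqNorm_sub_le (hL c hc).1 (hL a ha).1, sqNorm_sub_le (hL b hb).1 (hL c hc).1]
      _ = 64 * N ^ 6 := by ring
  obtain ⟨n, rfl⟩ := Int.eq_ofNat_of_zero_le ((hL a ha).2 ▸ sqNorm_nonneg (2 • a - m))
  have hn : n ≠ 0 := by
    rintro rfl
    have hcentre {l : ℤ × ℤ} (hl : l ∈ L) : 2 • l = m :=
      sub_eq_zero.1 (sqNorm_eq_zero.1 (hL l hl).2)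
    exact hab (smul_right_injective (ℤ × ℤ) (two_ne_zero' ℕ) ((hcentre ha).trans (hcentre hb).symm))
  calc (L.card : ℝ) ≤ (gaussianCircle n).card := by
        exact_mod_cast card_le_card_gaussianCircle fun l hl => (hL l hl).2
    _ ≤ C * (64 * N ^ 6) ^ (δ / 6) := by
        refine (hcircle n hn).trans ?_
        gcongr
        exact_mod_cast hD
    _ = C * 64 ^ (δ / 6) * N ^ δ := by
        rw [Real.mul_rpow (by positivity) (by positivity), ← Real.rpow_natCast N 6,
          ← Real.rpow_mul (by positivity), Nat.cast_ofNat, mul_div_cancel₀ δ (by norm_num),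
          mul_assoc]
    _ ≤ 2 * N ^ δ + C * 64 ^ (δ / 6) * N ^ δ := le_add_of_nonneg_left (by positivity)

/-! ### Resonances on the paraboloid -/

lemma sqNorm_le_sq_of_zAbs2_le {N : ℝ} {k : ℤ × ℤ} (hk : zAbs2 k ≤ N) :
    (sqNorm k : ℝ) ≤ N ^ 2 := by
  rw [sqNorm]
  push_cast
  exact (Real.sqrt_le_iff.1 hk).2

/-- The frequency ball `B(0, N) ⊆ ℤ²`. -/
def frequencyBall (N : ℝ) : Finset (ℤ × ℤ) :=
  (finite_setOf_sqNorm_le ⌊N ^ 2⌋).toFinset.filter fun k => zAbs2 k ≤ N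

lemma mem_frequencyBall {N : ℝ} {k : ℤ × ℤ} : k ∈ frequencyBall N ↔ zAbs2 k ≤ N := by
  rw [frequencyBall, Finset.mem_filter, Finite.mem_toFinset, and_iff_right_iff_imp]
  exact fun hk => Int.le_floor.2 (sqNorm_le_sq_of_zAbs2_le hk)

/-- The space-time frequency `(-|k|², k)` of the free Schrödinger wave with spatial frequency
`k`. -/
def paraboloid (k : ℤ × ℤ) : ℤ × ℤ × ℤ := (-sqNorm k, k)

lemma sqNorm_two_smul_sub_eq_of_paraboloid_add_eq {k l m : ℤ × ℤ} {τ : ℤ}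
    (h : paraboloid k + paraboloid l = (τ, m)) : sqNorm (2 • l - m) = -2 * τ - sqNorm m := by
  obtain ⟨hτ, rfl⟩ := Prod.ext_iff.1 h
  have hpar := sqNorm_add_add_sqNorm_sub l k
  simp only [paraboloid, Prod.fst_add, Prod.snd_add] at hτ ⊢
  rw [two_nsmul, add_comm k l, add_sub_add_left_eq_sub]
  linarith

/-- A pair `(k, l)` with `paraboloid k + paraboloid l` prescribed is determined by `l`, which lies
on a prescribed circle. -/
lemma exists_card_paraboloid_add_eq_le_mul_rpow {δ : ℝ} (hδ : 0 < δ) :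
    ∃ C : ℝ, 0 < C ∧ ∀ N₁ N₂ : ℝ, 1 ≤ N₂ → ∀ ν : ℤ × ℤ × ℤ,
      (((frequencyBall N₁ ×ˢ frequencyBall N₂).filter
        fun q => paraboloid q.1 + paraboloid q.2 = ν).card : ℝ) ≤ C * N₂ ^ δ := by
  obtain ⟨C, hC, hcircle⟩ := exists_card_circle_inter_ball_le_mul_rpow hδ
  refine ⟨C, hC, fun N₁ N₂ hN₂ ν => ?_⟩
  have hinj {q q' : (ℤ × ℤ) × ℤ × ℤ} (hq : paraboloid q.1 + paraboloid q.2 = ν)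
      (hq' : paraboloid q'.1 + paraboloid q'.2 = ν) (h : q.2 = q'.2) : q = q' := by
    have hsum : q.1 + q.2 = q'.1 + q'.2 := congrArg Prod.snd (hq.trans hq'.symm)
    exact Prod.ext (add_right_cancel (h ▸ hsum)) h
  rw [← Finset.card_image_of_injOn (f := Prod.snd) fun q hq q' hq' h =>
    hinj (Finset.mem_filter.1 hq).2 (Finset.mem_filter.1 hq').2 h]
  refine hcircle N₂ hN₂ ν.2 (-2 * ν.1 - sqNorm ν.2) _ fun l hl => ?_
  obtain ⟨q, hq, rfl⟩ := Finset.mem_image.1 hl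
  obtain ⟨hball, hν⟩ := Finset.mem_filter.1 hq
  exact ⟨sqNorm_le_sq_of_zAbs2_le (mem_frequencyBall.1 (Finset.mem_product.1 hball).2),
    sqNorm_two_smul_sub_eq_of_paraboloid_add_eq hν⟩

open scoped ComplexConjugate

/-! ### Orthogonal systems -/

section OrthogonalSystem

variable {X Y ι κ κ' : Type*} [MeasurableSpace X] [MeasurableSpace Y] [DecidableEq κ]
  [DecidableEq κ'] {μ : Measure X} {ν : Measure Y} {A B : ℝ≥0} {e : κ → X → ℂ} {f : κ' → Y → ℂ}

/-- A family of functions which are pairwise orthogonal in `L²(μ)` and have the same squared norm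
`A`, such as the characters of a torus. Integrability of the products `e k * conj (e l)` is a
separate field because the Bochner integral of a non-integrable function is `0`. -/
structure IsOrthogonalSystem (μ : Measure X) (A : ℝ≥0) (e : κ → X → ℂ) : Prop where
  integrable_mul_conj (k l : κ) : Integrable (fun x => e k x * conj (e l x)) μ
  integral_mul_conj (k l : κ) : ∫ x, e k x * conj (e l x) ∂μ = if k = l then (A : ℂ) else 0

lemma enorm_sq_eq_ofReal_norm_sq {E : Type*} [SeminormedAddGroup E] (z : E) :
    ‖z‖ₑ ^ 2 = ENNReal.ofReal (‖z‖ ^ 2) := by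
  rw [ENNReal.ofReal_pow (norm_nonneg z), ofReal_norm]

namespace IsOrthogonalSystem

lemma prod [SFinite μ] [SFinite ν] (he : IsOrthogonalSystem μ A e)
    (hf : IsOrthogonalSystem ν B f) :
    IsOrthogonalSystem (μ.prod ν) (A * B) fun (k : κ × κ') z => e k.1 z.1 * f k.2 z.2 := by
  have hsplit (k l : κ × κ') (z : X × Y) : e k.1 z.1 * f k.2 z.2 * conj (e l.1 z.1 * f l.2 z.2) =
      (e k.1 z.1 * conj (e l.1 z.1)) * (f k.2 z.2 * conj (f l.2 z.2)) := by
    rw [map_mul]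
    ring
  refine ⟨fun k l => ?_, fun k l => ?_⟩
  · simp_rw [hsplit]
    exact (he.integrable_mul_conj k.1 l.1).mul_prod (hf.integrable_mul_conj k.2 l.2)
  · simp_rw [hsplit]
    rw [integral_prod_mul (fun x => e k.1 x * conj (e l.1 x)) (fun y => f k.2 y * conj (f l.2 y)),
      he.integral_mul_conj, hf.integral_mul_conj, ite_zero_mul_ite_zero]
    simp only [Prod.ext_iff, NNReal.coe_mul, Complex.ofReal_mul]

lemma lintegral_enorm_sq_sum (he : IsOrthogonalSystem μ A e) (S : Finset κ) (c : κ → ℂ) :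
    ∫⁻ x, ‖∑ k ∈ S, c k * e k x‖ₑ ^ 2 ∂μ = A * ∑ k ∈ S, ‖c k‖ₑ ^ 2 := by
  have hexpand (x : X) : ((‖∑ k ∈ S, c k * e k x‖ ^ 2 : ℝ) : ℂ) =
      ∑ k ∈ S, ∑ l ∈ S, c k * conj (c l) * (e k x * conj (e l x)) := by
    rw [Complex.ofReal_pow, ← Complex.mul_conj', map_sum, Finset.sum_mul_sum]
    refine Finset.sum_congr rfl fun k _ => Finset.sum_congr rfl fun l _ => ?_
    rw [map_mul]
    ring
  have hint (k l : κ) : Integrable (fun x => c k * conj (c l) * (e k x * conj (e l x))) μ :=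
    (he.integrable_mul_conj k l).const_mul _
  have hint_sum (k : κ) :
      Integrable (fun x => ∑ l ∈ S, c k * conj (c l) * (e k x * conj (e l x))) μ :=
    integrable_finsetSum _ fun l _ => hint k l
  have hint_sq : Integrable (fun x => ‖∑ k ∈ S, c k * e k x‖ ^ 2) μ := by
    refine (integrable_finsetSum S fun k _ => hint_sum k).re.congr (ae_of_all _ fun x => ?_)
    simp only [← hexpand]
    exact Complex.ofReal_re _
  have hintegral : ∫ x, ‖∑ k ∈ S, c k * e k x‖ ^ 2 ∂μ = A * ∑ k ∈ S, ‖c k‖ ^ 2 := by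
    apply Complex.ofReal_injective
    rw [← integral_complex_ofReal]
    simp_rw [hexpand]
    rw [integral_finsetSum _ fun k _ => hint_sum k, Complex.ofReal_mul, Complex.ofReal_sum,
      Finset.mul_sum]
    refine Finset.sum_congr rfl fun k hk => ?_
    rw [integral_finsetSum _ fun l _ => hint k l]
    simp_rw [integral_const_mul, he.integral_mul_conj, mul_ite, mul_zero]
    rw [Finset.sum_ite_eq, if_pos hk, Complex.mul_conj', Complex.ofReal_pow, mul_comm]
  simp_rw [enorm_sq_eq_ofReal_norm_sq]
  rw [← ofReal_integral_eq_lintegral_ofReal hint_sq (ae_of_all _ fun x => by positivity),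
    hintegral, ENNReal.ofReal_mul A.coe_nonneg, ENNReal.ofReal_coe_nnreal,
    ENNReal.ofReal_sum_of_nonneg fun _ _ => by positivity]

end IsOrthogonalSystem

lemma enorm_sq_sum_le_card_mul (J : Finset ι) (c : ι → ℂ) :
    ‖∑ j ∈ J, c j‖ₑ ^ 2 ≤ J.card * ∑ j ∈ J, ‖c j‖ₑ ^ 2 := by
  have hcs : (∑ j ∈ J, ‖c j‖₊) ^ 2 ≤ J.card * ∑ j ∈ J, ‖c j‖₊ ^ 2 := sq_sum_le_card_mul_sum_sq
  calc ‖∑ j ∈ J, c j‖ₑ ^ 2 ≤ (∑ j ∈ J, ‖c j‖ₑ) ^ 2 := by gcongr; exact enorm_sum_le _ _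
    _ ≤ J.card * ∑ j ∈ J, ‖c j‖ₑ ^ 2 := by simp only [enorm_eq_nnnorm]; exact_mod_cast hcs

lemma IsOrthogonalSystem.lintegral_enorm_sq_sum_comp_le (he : IsOrthogonalSystem μ A e)
    {J : Finset ι} {p : ι → κ} {K : ℝ≥0∞} (hK : ∀ k, ((J.filter (p · = k)).card : ℝ≥0∞) ≤ K)
    (c : ι → ℂ) :
    ∫⁻ x, ‖∑ j ∈ J, c j * e (p j) x‖ₑ ^ 2 ∂μ ≤ A * (K * ∑ j ∈ J, ‖c j‖ₑ ^ 2) := by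
  have hmaps : ∀ j ∈ J, p j ∈ J.image p := fun j hj => Finset.mem_image_of_mem p hj
  have hfibre (x : X) : ∑ j ∈ J, c j * e (p j) x =
      ∑ k ∈ J.image p, (∑ j ∈ J with p j = k, c j) * e k x := by
    rw [← Finset.sum_fiberwise_of_maps_to hmaps]
    refine Finset.sum_congr rfl fun k _ => ?_
    rw [Finset.sum_mul]
    exact Finset.sum_congr rfl fun j hj => by rw [(Finset.mem_filter.1 hj).2]
  simp_rw [hfibre]
  rw [he.lintegral_enorm_sq_sum, ← Finset.sum_fiberwise_of_maps_to hmaps, Finset.mul_sum _ _ K]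
  gcongr with k
  exact (enorm_sq_sum_le_card_mul _ _).trans (by gcongr; exact hK k)

end OrthogonalSystem

/-! ### Characters of the torus -/

local instance fact_two_pi_pos : Fact (0 < 2 * π) := ⟨Real.two_pi_pos⟩

/-- One period of the torus with its Lebesgue measure. -/
abbrev periodMeasure : Measure ℝ := volume.restrict (Ioc 0 (2 * π))

/-- The character `x ↦ e^{inx}` of the torus, as a `2π`-periodic function on the line. -/
def torusChar (n : ℤ) (x : ℝ) : ℂ := fourier n (x : AddCircle (2 * π))

lemma torusChar_eq_exp (n : ℤ) (x : ℝ) : torusChar n x = Complex.exp (Complex.I * (n * x : ℝ)) := by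
  rw [torusChar, fourier_coe_apply]
  congr 1
  have hpi : (π : ℂ) ≠ 0 := by exact_mod_cast Real.pi_ne_zero
  push_cast
  field_simp

lemma torusChar_add (m n : ℤ) (x : ℝ) : torusChar (m + n) x = torusChar m x * torusChar n x :=
  fourier_add

@[fun_prop]
lemma continuous_torusChar (n : ℤ) : Continuous (torusChar n) :=
  (fourier n).continuous.comp (AddCircle.continuous_mk' _)

lemma periodic_torusChar (n : ℤ) : Function.Periodic (torusChar n) (2 * π) := fun x => by
  rw [torusChar, AddCircle.coe_add_period, torusChar]

lemma torusChar_neg (n : ℤ) (x : ℝ) : torusChar (-n) x = conj (torusChar n x) :=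
  fourier_neg

lemma isOrthogonalSystem_torusChar :
    IsOrthogonalSystem periodMeasure (2 * NNReal.pi) torusChar := by
  refine ⟨fun k l => ?_, fun k l => ?_⟩
  · simp_rw [← torusChar_neg]
    exact Continuous.integrableOn_Ioc (by fun_prop)
  · have hcoeff : fourierCoeff (T := 2 * π) (fourier k) l = ((2 * π : ℝ) : ℂ)⁻¹ *
        ∫ x in Ioc 0 (2 * π), torusChar k x * conj (torusChar l x) := by
      rw [fourierCoeff_eq_intervalIntegral _ _ 0, zero_add,
        intervalIntegral.integral_of_le Real.two_pi_pos.le, one_div, Complex.real_smul,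
        Complex.ofReal_inv]
      simp_rw [smul_eq_mul, fourier_neg, mul_comm (conj _)]
      rfl
    rw [fourierCoeff_fourier, eq_inv_mul_iff_mul_eq₀ (by simp [Real.pi_ne_zero])] at hcoeff
    rw [← hcoeff, Pi.single_apply]
    simp [eq_comm]

/-! ### Weighted time integrals of periodic functions -/

lemma setLIntegral_Ioc_add_eq_of_periodic {T : ℝ} (hT : 0 < T) {u : ℝ → ℝ≥0∞}
    (hu : Function.Periodic u T) (s t : ℝ) :
    ∫⁻ x in Ioc s (s + T), u x = ∫⁻ x in Ioc t (t + T), u x :=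
  have : VAddInvariantMeasure (AddSubgroup.zmultiples T) ℝ volume :=
    ⟨fun c _ _ => measure_preimage_add _ _ _⟩
  (isAddFundamentalDomain_Ioc hT s).setLIntegral_eq (isAddFundamentalDomain_Ioc hT t) u
    hu.map_vadd_zmultiples

lemma setLIntegral_Ioc_add_natCast_mul_of_periodic {T : ℝ} (hT : 0 < T) {u : ℝ → ℝ≥0∞}
    (hu : Function.Periodic u T) (a : ℝ) (n : ℕ) :
    ∫⁻ x in Ioc a (a + n * T), u x = n * ∫⁻ x in Ioc 0 T, u x := by
  induction n with
  | zero => simp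
  | succ n ih =>
    have hsplit : Ioc a (a + (n + 1 : ℕ) * T) =
        Ioc a (a + n * T) ∪ Ioc (a + n * T) (a + n * T + T) := by
      rw [Ioc_union_Ioc_eq_Ioc (by simp [hT.le, mul_nonneg]) (by linarith)]
      push_cast
      ring_nf
    have hperiod := setLIntegral_Ioc_add_eq_of_periodic hT hu (a + n * T) 0
    rw [zero_add] at hperiod
    rw [hsplit, lintegral_union measurableSet_Ioc (Ioc_disjoint_Ioc_of_le le_rfl), ih, hperiod]
    push_cast
    ring

/-- The substitution `s = g t` sweeps out at most `n` periods. -/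
lemma exists_setLIntegral_deriv_mul_comp_le {g : ℝ → ℝ} (hg : Differentiable ℝ g)
    (hmono : Monotone g) {T : ℝ} (hT : 0 < T) (a b : ℝ) :
    ∃ n : ℕ, ∀ u : ℝ → ℝ≥0∞, Function.Periodic u T →
      ∫⁻ t in Icc a b, ENNReal.ofReal (deriv g t) * u (g t) ≤ n * ∫⁻ s in Ioc 0 T, u s := by
  obtain ⟨n, hn⟩ := exists_nat_ge ((g b - g a) / T)
  have hgb : g b ≤ g a + n * T := by
    have := (div_le_iff₀ hT).1 hn
    linarith
  refine ⟨n, fun u hu => ?_⟩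
  calc ∫⁻ t in Icc a b, ENNReal.ofReal (deriv g t) * u (g t) = ∫⁻ s in g '' Icc a b, u s :=
        (lintegral_image_eq_lintegral_deriv_mul_of_monotoneOn measurableSet_Icc
          (fun t _ => (hg t).hasDerivAt.hasDerivWithinAt) (hmono.monotoneOn _) u).symm
    _ ≤ ∫⁻ s in Icc (g a) (g a + n * T), u s := by
        refine lintegral_mono_set ?_
        rintro _ ⟨t, ht, rfl⟩
        exact ⟨hmono ht.1, (hmono ht.2).trans hgb⟩
    _ = n * ∫⁻ s in Ioc 0 T, u s := by
        rw [setLIntegral_congr Ioc_ae_eq_Icc.symm,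
          setLIntegral_Ioc_add_natCast_mul_of_periodic hT hu]

/-! ### Bessel's inequality -/

/-- The Fourier coefficient `∫ e^{-inx} f(x) dx` over a period, without Mathlib's factor
`(2π)⁻¹`. -/
def torusCoeff (f : ℝ → ℂ) (n : ℤ) : ℂ := ∫ x, torusChar (-n) x * f x ∂periodMeasure

lemma torusCoeff_eq_zero_of_not_aestronglyMeasurable {f : ℝ → ℂ}
    (hf : ¬ AEStronglyMeasurable f periodMeasure) (n : ℤ) : torusCoeff f n = 0 := by
  refine integral_undef fun hint => hf ?_
  refine ((continuous_torusChar n).aestronglyMeasurable.mul hint.aestronglyMeasurable).congr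
    (ae_of_all _ fun x => ?_)
  simp only [Pi.mul_apply]
  rw [← mul_assoc, ← torusChar_add, add_neg_cancel, torusChar_eq_exp]
  simp

lemma fourierCoeffOn_eq_torusCoeff (f : ℝ → ℂ) (n : ℤ) :
    fourierCoeffOn Real.two_pi_pos f n = (2 * π)⁻¹ • torusCoeff f n := by
  rw [fourierCoeffOn_eq_integral, torusCoeff, sub_zero, one_div,
    intervalIntegral.integral_of_le Real.two_pi_pos.le]
  rfl

lemma sum_enorm_sq_torusCoeff_le (f : ℝ → ℂ) (S : Finset ℤ) :
    ∑ n ∈ S, ‖torusCoeff f n‖ₑ ^ 2 ≤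
      ENNReal.ofReal (2 * π) * ∫⁻ x, ‖f x‖ₑ ^ 2 ∂periodMeasure := by
  by_cases hf : AEStronglyMeasurable f periodMeasure
  swap
  · simp [torusCoeff_eq_zero_of_not_aestronglyMeasurable hf]
  by_cases hfin : ∫⁻ x, ‖f x‖ₑ ^ 2 ∂periodMeasure = ⊤
  · simp [hfin, ENNReal.mul_top, Real.pi_pos]
  simp_rw [enorm_sq_eq_ofReal_norm_sq] at hfin ⊢
  have hsq : Integrable (fun x => ‖f x‖ ^ 2) periodMeasure :=
    (lintegral_ofReal_ne_top_iff_integrable (hf.norm.pow 2)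
      (ae_of_all _ fun x => sq_nonneg ‖f x‖)).1 hfin
  have hbessel : ∑ n ∈ S, ‖torusCoeff f n‖ ^ 2 ≤ 2 * π * ∫ x, ‖f x‖ ^ 2 ∂periodMeasure := by
    have hsum := sum_le_hasSum S (fun n _ => by positivity)
      (hasSum_sq_fourierCoeffOn Real.two_pi_pos ((memLp_two_iff_integrable_sq_norm hf).2 hsq))
    simp_rw [fourierCoeffOn_eq_torusCoeff, norm_smul, mul_pow, ← Finset.mul_sum] at hsum
    rw [intervalIntegral.integral_of_le Real.two_pi_pos.le, sub_zero, smul_eq_mul,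
      Real.norm_of_nonneg (by positivity)] at hsum
    field_simp at hsum
    exact hsum
  rw [← ENNReal.ofReal_sum_of_nonneg fun _ _ => by positivity,
    ← ofReal_integral_eq_lintegral_ofReal hsq (ae_of_all _ fun x => by positivity),
    ← ENNReal.ofReal_mul Real.two_pi_pos.le]
  exact ENNReal.ofReal_le_ofReal hbessel

lemma fCoeff2_eq_torusCoeff (φ : ℝ → ℝ → ℂ) (k : ℤ × ℤ) :
    fCoeff2 φ k = torusCoeff (fun x1 => torusCoeff (φ x1) k.2) k.1 := by
  have hchar (x1 x2 : ℝ) : Complex.exp (-Complex.I * (k.1 * x1 + k.2 * x2 : ℝ)) =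
      torusChar (-k.1) x1 * torusChar (-k.2) x2 := by
    rw [torusChar_eq_exp, torusChar_eq_exp, ← Complex.exp_add]
    push_cast
    ring_nf
  simp_rw [fCoeff2, torusCoeff, intervalIntegral.integral_of_le Real.two_pi_pos.le, hchar,
    mul_assoc, integral_const_mul]

lemma LpT2_two_sq (φ : ℝ → ℝ → ℂ) :
    LpT2 2 φ ^ 2 = ∫⁻ x1, ∫⁻ x2, ‖φ x1 x2‖ₑ ^ 2 ∂periodMeasure ∂periodMeasure := by
  simp_rw [LpT2, one_div, Real.rpow_two, ← enorm_sq_eq_ofReal_norm_sq]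
  exact_mod_cast ENNReal.rpow_inv_natCast_pow two_ne_zero _

/-- Where a partial coefficient is not measurable in `x1`, the corresponding values of
`fCoeff2` vanish. -/
lemma sum_enorm_sq_fCoeff2_le (φ : ℝ → ℝ → ℂ) (S : Finset (ℤ × ℤ)) :
    ∑ k ∈ S, ‖fCoeff2 φ k‖ₑ ^ 2 ≤ ENNReal.ofReal (2 * π) ^ 2 * LpT2 2 φ ^ 2 := by
  classical
  let c (n : ℤ) (x1 : ℝ) : ℂ := torusCoeff (φ x1) n
  let S₁ := S.image Prod.fst
  let S₂ := (S.image Prod.snd).filter fun n => AEStronglyMeasurable (c n) periodMeasure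
  have hmeasurable : ∑ k ∈ S, ‖fCoeff2 φ k‖ₑ ^ 2 ≤
      ∑ n ∈ S₂, ∑ m ∈ S₁, ‖torusCoeff (c n) m‖ₑ ^ 2 := by
    rw [← Finset.sum_product_right']
    simp_rw [fCoeff2_eq_torusCoeff]
    refine Finset.sum_le_sum_of_ne_zero fun k hk hne => ?_
    refine Finset.mem_product.2 ⟨Finset.mem_image_of_mem _ hk,
      Finset.mem_filter.2 ⟨Finset.mem_image_of_mem _ hk, ?_⟩⟩
    by_contra hc
    exact hne (by rw [torusCoeff_eq_zero_of_not_aestronglyMeasurable hc]; simp)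
  calc ∑ k ∈ S, ‖fCoeff2 φ k‖ₑ ^ 2
      ≤ ∑ n ∈ S₂, ∑ m ∈ S₁, ‖torusCoeff (c n) m‖ₑ ^ 2 := hmeasurable
    _ ≤ ∑ n ∈ S₂, ENNReal.ofReal (2 * π) * ∫⁻ x1, ‖c n x1‖ₑ ^ 2 ∂periodMeasure := by
        gcongr with n
        exact sum_enorm_sq_torusCoeff_le (c n) S₁
    _ = ENNReal.ofReal (2 * π) * ∫⁻ x1, ∑ n ∈ S₂, ‖torusCoeff (φ x1) n‖ₑ ^ 2 ∂periodMeasure := by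
        rw [← Finset.mul_sum, lintegral_finsetSum' _ fun n hn => ?_]
        exact (Finset.mem_filter.1 hn).2.enorm.pow_const 2
    _ ≤ ENNReal.ofReal (2 * π) * ∫⁻ x1, ENNReal.ofReal (2 * π) *
          ∫⁻ x2, ‖φ x1 x2‖ₑ ^ 2 ∂periodMeasure ∂periodMeasure := by
        gcongr with x1
        exact sum_enorm_sq_torusCoeff_le (φ x1) S₂
    _ = ENNReal.ofReal (2 * π) ^ 2 * LpT2 2 φ ^ 2 := by
        rw [lintegral_const_mul' _ _ ENNReal.ofReal_ne_top, ← mul_assoc, ← sq, LpT2_two_sq]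

/-! ### The bilinear estimate -/

/-- The character `e^{i(ns + m·x)}` of `𝕋 × 𝕋²`, where `s` is the time variable `g(t)`. -/
def spaceTimeChar (ν : ℤ × ℤ × ℤ) (z : ℝ × ℝ × ℝ) : ℂ :=
  torusChar ν.1 z.1 * (torusChar ν.2.1 z.2.1 * torusChar ν.2.2 z.2.2)

lemma isOrthogonalSystem_spaceTimeChar :
    IsOrthogonalSystem (periodMeasure.prod (periodMeasure.prod periodMeasure))
      (2 * NNReal.pi * (2 * NNReal.pi * (2 * NNReal.pi))) spaceTimeChar :=
  isOrthogonalSystem_torusChar.prod (isOrthogonalSystem_torusChar.prod isOrthogonalSystem_torusChar)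

lemma spaceTimeChar_add (μ ν : ℤ × ℤ × ℤ) (z : ℝ × ℝ × ℝ) :
    spaceTimeChar (μ + ν) z = spaceTimeChar μ z * spaceTimeChar ν z := by
  simp only [spaceTimeChar, Prod.fst_add, Prod.snd_add, torusChar_add]
  ring

@[fun_prop]
lemma continuous_spaceTimeChar (ν : ℤ × ℤ × ℤ) : Continuous (spaceTimeChar ν) := by
  unfold spaceTimeChar
  fun_prop

lemma periodic_spaceTimeChar (ν : ℤ × ℤ × ℤ) (x : ℝ × ℝ) :
    Function.Periodic (fun s => spaceTimeChar ν (s, x)) (2 * π) := fun s => by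
  simp only [spaceTimeChar, periodic_torusChar ν.1 s]

lemma lintegral_enorm_sq_sum_spaceTimeChar_le {ι : Type*} {J : Finset ι} {p : ι → ℤ × ℤ × ℤ}
    {K : ℝ≥0∞} (hK : ∀ ν, ((J.filter (p · = ν)).card : ℝ≥0∞) ≤ K) (c : ι → ℂ) :
    ∫⁻ s, ∫⁻ x1, ∫⁻ x2, ‖∑ j ∈ J, c j * spaceTimeChar (p j) (s, x1, x2)‖ₑ ^ 2
      ∂periodMeasure ∂periodMeasure ∂periodMeasure ≤
    ENNReal.ofReal (2 * π) ^ 3 * (K * ∑ j ∈ J, ‖c j‖ₑ ^ 2) := by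
  have hmeasurable : Measurable fun z => ‖∑ j ∈ J, c j * spaceTimeChar (p j) z‖ₑ ^ 2 :=
    Continuous.measurable (by fun_prop)
  have htwo_pi : ENNReal.ofReal (2 * π) = (2 * NNReal.pi : ℝ≥0) :=
    ENNReal.ofReal_coe_nnreal (p := 2 * NNReal.pi)
  calc _ = ∫⁻ z, ‖∑ j ∈ J, c j * spaceTimeChar (p j) z‖ₑ ^ 2
          ∂periodMeasure.prod (periodMeasure.prod periodMeasure) := by
        rw [lintegral_prod _ hmeasurable.aemeasurable]
        refine lintegral_congr fun s => ?_
        exact (lintegral_prod _ (hmeasurable.comp measurable_prodMk_left).aemeasurable).symm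
    _ ≤ _ := isOrthogonalSystem_spaceTimeChar.lintegral_enorm_sq_sum_comp_le hK c
    _ = ENNReal.ofReal (2 * π) ^ 3 * (K * ∑ j ∈ J, ‖c j‖ₑ ^ 2) := by
        rw [htwo_pi]
        push_cast
        ring

lemma exists_setLIntegral_deriv_mul_enorm_sq_sum_spaceTimeChar_le {ι : Type*} {g : ℝ → ℝ}
    (hg : Differentiable ℝ g) (hmono : Monotone g) (a b : ℝ) :
    ∃ n : ℕ, ∀ {J : Finset ι} {p : ι → ℤ × ℤ × ℤ} {K : ℝ≥0∞},
      (∀ ν, ((J.filter (p · = ν)).card : ℝ≥0∞) ≤ K) → ∀ c : ι → ℂ,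
      ∫⁻ t in Icc a b, ENNReal.ofReal (deriv g t) * ∫⁻ x1, ∫⁻ x2,
        ‖∑ j ∈ J, c j * spaceTimeChar (p j) (g t, x1, x2)‖ₑ ^ 2 ∂periodMeasure ∂periodMeasure ≤
      n * (ENNReal.ofReal (2 * π) ^ 3 * (K * ∑ j ∈ J, ‖c j‖ₑ ^ 2)) := by
  obtain ⟨n, hn⟩ := exists_setLIntegral_deriv_mul_comp_le hg hmono Real.two_pi_pos a b
  refine ⟨n, fun {J p K} hK c => ?_⟩
  have hperiodic : Function.Periodic (fun s => ∫⁻ x1, ∫⁻ x2,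
      ‖∑ j ∈ J, c j * spaceTimeChar (p j) (s, x1, x2)‖ₑ ^ 2 ∂periodMeasure ∂periodMeasure)
      (2 * π) := fun s => by
    simp only [fun ν x => periodic_spaceTimeChar ν x s]
  exact (hn _ hperiodic).trans (by gcongr; exact lintegral_enorm_sq_sum_spaceTimeChar_le hK c)

lemma Sop2_eq_sum_spaceTimeChar (g : ℝ → ℝ) {φ : ℝ → ℝ → ℂ} {N : ℝ}
    (hφ : ∀ k : ℤ × ℤ, N < zAbs2 k → fCoeff2 φ k = 0) (t x1 x2 : ℝ) :
    Sop2 g φ t x1 x2 =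
      ∑ k ∈ frequencyBall N, fCoeff2 φ k * spaceTimeChar (paraboloid k) (g t, x1, x2) := by
  rw [Sop2, tsum_eq_sum (s := frequencyBall N)]
  · refine Finset.sum_congr rfl fun k _ => ?_
    simp only [spaceTimeChar, paraboloid, torusChar_eq_exp, ← Complex.exp_add, sqNorm]
    rw [mul_comm]
    push_cast
    ring_nf
  · intro k hk
    rw [hφ k (not_le.1 (mt mem_frequencyBall.2 hk)), mul_zero]

lemma Sop2_mul_Sop2_eq_sum (g : ℝ → ℝ) {φ₁ φ₂ : ℝ → ℝ → ℂ} {N₁ N₂ : ℝ}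
    (hφ₁ : ∀ k : ℤ × ℤ, N₁ < zAbs2 k → fCoeff2 φ₁ k = 0)
    (hφ₂ : ∀ k : ℤ × ℤ, N₂ < zAbs2 k → fCoeff2 φ₂ k = 0) (t x1 x2 : ℝ) :
    Sop2 g φ₁ t x1 x2 * Sop2 g φ₂ t x1 x2 =
      ∑ q ∈ frequencyBall N₁ ×ˢ frequencyBall N₂, fCoeff2 φ₁ q.1 * fCoeff2 φ₂ q.2 *
        spaceTimeChar (paraboloid q.1 + paraboloid q.2) (g t, x1, x2) := by
  rw [Sop2_eq_sum_spaceTimeChar g hφ₁, Sop2_eq_sum_spaceTimeChar g hφ₂, Finset.sum_mul_sum,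
    ← Finset.sum_product']
  refine Finset.sum_congr rfl fun q _ => ?_
  rw [spaceTimeChar_add]
  ring

lemma sum_enorm_sq_fCoeff2_mul_le (φ₁ φ₂ : ℝ → ℝ → ℂ) (S₁ S₂ : Finset (ℤ × ℤ)) :
    ∑ q ∈ S₁ ×ˢ S₂, ‖fCoeff2 φ₁ q.1 * fCoeff2 φ₂ q.2‖ₑ ^ 2 ≤
      ENNReal.ofReal (2 * π) ^ 4 * (LpT2 2 φ₁ * LpT2 2 φ₂) ^ 2 := by
  calc ∑ q ∈ S₁ ×ˢ S₂, ‖fCoeff2 φ₁ q.1 * fCoeff2 φ₂ q.2‖ₑ ^ 2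
      = (∑ k ∈ S₁, ‖fCoeff2 φ₁ k‖ₑ ^ 2) * ∑ l ∈ S₂, ‖fCoeff2 φ₂ l‖ₑ ^ 2 := by
        simp_rw [enorm_mul, mul_pow, Finset.sum_product, Finset.sum_mul_sum]
    _ ≤ (ENNReal.ofReal (2 * π) ^ 2 * LpT2 2 φ₁ ^ 2) *
          (ENNReal.ofReal (2 * π) ^ 2 * LpT2 2 φ₂ ^ 2) := by
        gcongr <;> exact sum_enorm_sq_fCoeff2_le _ _
    _ = ENNReal.ofReal (2 * π) ^ 4 * (LpT2 2 φ₁ * LpT2 2 φ₂) ^ 2 := by ring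

lemma LpIT2_two_sq_sqrt_deriv_mul {g : ℝ → ℝ} (hmono : Monotone g) (I : Set ℝ)
    (u : ℝ → ℝ → ℝ → ℂ) :
    LpIT2 2 I (fun t x1 x2 => ((deriv g t ^ ((1 : ℝ) / 2) : ℝ) : ℂ) * u t x1 x2) ^ 2 =
      ∫⁻ t in I, ENNReal.ofReal (deriv g t) *
        ∫⁻ x1, ∫⁻ x2, ‖u t x1 x2‖ₑ ^ 2 ∂periodMeasure ∂periodMeasure := by
  have hweight (t : ℝ) (z : ℂ) : ENNReal.ofReal (‖((deriv g t ^ ((1 : ℝ) / 2) : ℝ) : ℂ) * z‖ ^ 2) =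
      ENNReal.ofReal (deriv g t) * ‖z‖ₑ ^ 2 := by
    have hderiv : 0 ≤ deriv g t := hmono.deriv_nonneg
    rw [norm_mul, mul_pow, ENNReal.ofReal_mul (by positivity), ← enorm_sq_eq_ofReal_norm_sq z,
      Complex.norm_real, Real.norm_eq_abs, sq_abs, ← Real.sqrt_eq_rpow, Real.sq_sqrt hderiv]
  simp_rw [LpIT2, one_div (2 : ℝ), Real.rpow_two, ← one_div (2 : ℝ), hweight,
    lintegral_const_mul' _ _ ENNReal.ofReal_ne_top, one_div (2 : ℝ)]
  exact_mod_cast ENNReal.rpow_inv_natCast_pow two_ne_zero _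

lemma exists_LpIT2_two_sq_le {g : ℝ → ℝ} (hg : Differentiable ℝ g) (hmono : Monotone g)
    {δ : ℝ} (hδ : 0 < δ) (a b : ℝ) :
    ∃ C : ℝ, 0 < C ∧ ∀ N₁ N₂ : ℝ, 1 ≤ N₂ → ∀ φ₁ φ₂ : ℝ → ℝ → ℂ,
      (∀ k : ℤ × ℤ, N₁ < zAbs2 k → fCoeff2 φ₁ k = 0) →
      (∀ k : ℤ × ℤ, N₂ < zAbs2 k → fCoeff2 φ₂ k = 0) →
      LpIT2 2 (Icc a b) (fun t x1 x2 =>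
        ((deriv g t ^ ((1 : ℝ) / 2) : ℝ) : ℂ) * (Sop2 g φ₁ t x1 x2 * Sop2 g φ₂ t x1 x2)) ^ 2 ≤
      ENNReal.ofReal (C * N₂ ^ δ) * (LpT2 2 φ₁ * LpT2 2 φ₂) ^ 2 := by
  obtain ⟨n, hn⟩ := exists_setLIntegral_deriv_mul_enorm_sq_sum_spaceTimeChar_le
    (ι := (ℤ × ℤ) × ℤ × ℤ) hg hmono a b
  obtain ⟨K, hK, hcard⟩ := exists_card_paraboloid_add_eq_le_mul_rpow hδ
  refine ⟨(n + 1) * (2 * π) ^ 7 * K, by positivity, fun N₁ N₂ hN₂ φ₁ φ₂ hφ₁ hφ₂ => ?_⟩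
  have hfibre (ν : ℤ × ℤ × ℤ) : (((frequencyBall N₁ ×ˢ frequencyBall N₂).filter
      fun q => paraboloid q.1 + paraboloid q.2 = ν).card : ℝ≥0∞) ≤ ENNReal.ofReal (K * N₂ ^ δ) := by
    rw [← ENNReal.ofReal_natCast]
    exact ENNReal.ofReal_le_ofReal (hcard N₁ N₂ hN₂ ν)
  have hconst : ENNReal.ofReal ((n + 1) * (2 * π) ^ 7 * K * N₂ ^ δ) =
      (n + 1) * (ENNReal.ofReal (2 * π) ^ 7 * ENNReal.ofReal (K * N₂ ^ δ)) := by
    rw [mul_assoc _ K, mul_assoc, ENNReal.ofReal_mul (by positivity),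
      ENNReal.ofReal_mul (by positivity), ENNReal.ofReal_pow (by positivity)]
    norm_cast
  rw [LpIT2_two_sq_sqrt_deriv_mul hmono, hconst]
  simp_rw [Sop2_mul_Sop2_eq_sum g hφ₁ hφ₂]
  calc _ ≤ n * (ENNReal.ofReal (2 * π) ^ 3 * (ENNReal.ofReal (K * N₂ ^ δ) *
          ∑ q ∈ frequencyBall N₁ ×ˢ frequencyBall N₂, ‖fCoeff2 φ₁ q.1 * fCoeff2 φ₂ q.2‖ₑ ^ 2)) :=
        hn hfibre _
    _ ≤ (n + 1) * (ENNReal.ofReal (2 * π) ^ 3 * (ENNReal.ofReal (K * N₂ ^ δ) *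
          (ENNReal.ofReal (2 * π) ^ 4 * (LpT2 2 φ₁ * LpT2 2 φ₂) ^ 2))) := by
        gcongr
        · exact le_self_add
        · exact sum_enorm_sq_fCoeff2_mul_le _ _ _ _
    _ = _ := by ring

theorem weighted_bilinear_Strichartz_frequency_localized_general {g : ℝ → ℝ}
    (hg : Differentiable ℝ g) (hmono : Monotone g) {ε : ℝ} (hε : 0 < ε) (a b : ℝ) :
    ∃ C : ℝ, 0 < C ∧ ∀ N₁ N₂ : ℝ, 1 ≤ N₂ → ∀ φ₁ φ₂ : ℝ → ℝ → ℂ, Periodic2 φ₁ → Periodic2 φ₂ →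
      LpT2 2 φ₁ < ⊤ → LpT2 2 φ₂ < ⊤ →
      (∀ k : ℤ × ℤ, N₁ < zAbs2 k → fCoeff2 φ₁ k = 0) →
      (∀ k : ℤ × ℤ, N₂ < zAbs2 k → fCoeff2 φ₂ k = 0) →
      LpIT2 2 (Icc a b) (fun t x1 x2 =>
        ((deriv g t ^ ((1 : ℝ) / 2) : ℝ) : ℂ) * (Sop2 g φ₁ t x1 x2 * Sop2 g φ₂ t x1 x2)) ≤
      ENNReal.ofReal (C * N₂ ^ ε) * (LpT2 2 φ₁ * LpT2 2 φ₂) := by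
  obtain ⟨C, hC, hsq⟩ := exists_LpIT2_two_sq_le hg hmono (mul_pos two_pos hε) a b
  refine ⟨√C, by positivity, fun N₁ N₂ hN₂ φ₁ φ₂ _ _ _ _ hφ₁ hφ₂ => ?_⟩
  have hconst : ENNReal.ofReal (C * N₂ ^ (2 * ε)) = ENNReal.ofReal (√C * N₂ ^ ε) ^ 2 := by
    rw [← ENNReal.ofReal_pow (by positivity), mul_pow, Real.sq_sqrt hC.le, mul_comm 2 ε,
      Real.rpow_mul (by positivity), Real.rpow_two]
  refine (ENNReal.pow_le_pow_left_iff two_ne_zero).1 ?_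
  rw [mul_pow, ← hconst]
  exact hsq N₁ N₂ hN₂ φ₁ φ₂ hφ₁ hφ₂

/-- Frequency-localized weighted bilinear `L²` Strichartz estimate on `𝕋²`:
for `φ_{N₁}, φ_{N₂} ∈ L²(𝕋²)` with Fourier support in `B(0,N₁)`, `B(0,N₂)`, `N₁ ≥ N₂`, and a
finite interval `I` centered at `0`,
`‖g'(t)^{1/2} (S(t)φ_{N₁})(S(t)φ_{N₂})‖_{L²(I×𝕋²)} ≤ C(ε,I) min(N₁,N₂)^ε ‖φ_{N₁}‖_{L²} ‖φ_{N₂}‖_{L²}`. -/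
theorem weighted_bilinear_Strichartz_frequency_localized
    (g : ℝ → ℝ) (hg_smooth : ContDiff ℝ (⊤ : ℕ∞) g) (hg_mono : StrictMono g)
    (hg0 : g 0 = 0) (hg'0 : deriv g 0 = 0) :
    ∀ ε : ℝ, 0 < ε → ∀ r : ℝ, 0 < r →
      ∃ C : ℝ, 0 < C ∧ ∀ N₁ N₂ : ℝ, 1 ≤ N₂ → N₂ ≤ N₁ →
        ∀ φ₁ φ₂ : ℝ → ℝ → ℂ, Periodic2 φ₁ → Periodic2 φ₂ →
          LpT2 2 φ₁ < ⊤ → LpT2 2 φ₂ < ⊤ →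
          (∀ k : ℤ × ℤ, N₁ < zAbs2 k → fCoeff2 φ₁ k = 0) →
          (∀ k : ℤ × ℤ, N₂ < zAbs2 k → fCoeff2 φ₂ k = 0) →
          LpIT2 2 (Icc (-r) r)
              (fun t x1 x2 =>
                ((deriv g t ^ ((1:ℝ)/2) : ℝ) : ℂ) * (Sop2 g φ₁ t x1 x2 * Sop2 g φ₂ t x1 x2)) ≤
            ENNReal.ofReal (C * (min N₁ N₂) ^ ε) * (LpT2 2 φ₁ * LpT2 2 φ₂) := by
  intro ε hε r _
  obtain ⟨C, hC, hbound⟩ := weighted_bilinear_Strichartz_frequency_localized_general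
    (hg_smooth.differentiable (by simp)) hg_mono.monotone hε (-r) r
  refine ⟨C, hC, fun N₁ N₂ hN₂ hN => ?_⟩
  rw [min_eq_right hN]
  exact hbound N₁ N₂ hN₂
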